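/- Fix D* ∈ [0.005, 0.995], ε ∈ (0, D*), f_n = (D* − ε)/(2n), and k ∈ {0, 1, …, n}. Let F_k be the set of λ ∈ ℝ₊ⁿ with Σᵢ λᵢ = n such that, writing t = t_wf(λ, D*) (the water level with D_wf(λ, t) = D*), one has λᵢ ≥ t + ε f_n for all i ≤ k and 0 ≤ λᵢ ≤ t − ε f_n for all i > k. If λ* maximizes G(λ) = 𝐑_rc(λ, D*) − 𝐑_wf(λ, D*) over F_k, then the coordinates of λ* take at most 5 distinct values. -/

import Mathlib

open Real

/-- Waterfilling distortion `D_wf(λ, t) = (1/n) Σᵢ min{λᵢ, t}`. -/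
noncomputable def Dwf {n : ℕ} (lam : Fin n → ℝ) (t : ℝ) : ℝ :=
  (1 / (n : ℝ)) * ∑ i, min (lam i) t

/-- Waterfilling rate `R_wf(λ, t) = (1/(2n)) Σᵢ max{0, log₂(λᵢ/t)}`. -/
noncomputable def Rwf {n : ℕ} (lam : Fin n → ℝ) (t : ℝ) : ℝ :=
  (1 / (2 * (n : ℝ))) * ∑ i, max 0 (Real.logb 2 (lam i / t))

/-- Random-coding distortion `D_rc(λ, T) = (1/n) Σᵢ λᵢ/(1 + λᵢ T)`. -/
noncomputable def Drc {n : ℕ} (lam : Fin n → ℝ) (T : ℝ) : ℝ :=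
  (1 / (n : ℝ)) * ∑ i, lam i / (1 + lam i * T)

/-- Random-coding rate `R_rc(λ, T) = (1/(2n)) Σᵢ log₂(1 + λᵢ T)`. -/
noncomputable def Rrc {n : ℕ} (lam : Fin n → ℝ) (T : ℝ) : ℝ :=
  (1 / (2 * (n : ℝ))) * ∑ i, Real.logb 2 (1 + lam i * T)

/-- `t_wf(λ, D)`: the water level `t > 0` with `D_wf(λ, t) = D`. -/
noncomputable def twfD {n : ℕ} (lam : Fin n → ℝ) (D : ℝ) : ℝ :=
  Classical.epsilon fun t => 0 < t ∧ Dwf lam t = D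

/-- `𝐑_wf(λ, D) = R_wf(λ, t_wf(λ, D))`. -/
noncomputable def RRwf {n : ℕ} (lam : Fin n → ℝ) (D : ℝ) : ℝ :=
  Rwf lam (twfD lam D)

/-- `T > 0` solving `D_rc(λ, T) = D`. -/
noncomputable def TrcD {n : ℕ} (lam : Fin n → ℝ) (D : ℝ) : ℝ :=
  Classical.epsilon fun T => 0 < T ∧ Drc lam T = D

/-- `𝐑_rc(λ, D) = R_rc(λ, T)` where `T > 0` solves `D_rc(λ, T) = D`. -/
noncomputable def RRrc {n : ℕ} (lam : Fin n → ℝ) (D : ℝ) : ℝ :=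
  Rrc lam (TrcD lam D)

/-- The feasible set `F_k`: spectra with trace `n` whose first `k` coordinates are
at least `t_wf(λ, D*) + ε f_n` (active set) and whose remaining coordinates are at
most `t_wf(λ, D*) - ε f_n` (inactive set), with `f_n = (D* - ε)/(2n)`.
(Indices of `Fin n` are 0-based: `i ≤ k` in 1-based notation is `(i : ℕ) < k`.) -/
def Fk (n : ℕ) (k : ℕ) (Dstar ε : ℝ) (lam : Fin n → ℝ) : Prop :=
  (∀ i, 0 ≤ lam i) ∧ (∑ i, lam i) = (n : ℝ) ∧
  (∀ i : Fin n, (i : ℕ) < k →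
    twfD lam Dstar + ε * ((Dstar - ε) / (2 * (n : ℝ))) ≤ lam i) ∧
  (∀ i : Fin n, k ≤ (i : ℕ) →
    lam i ≤ twfD lam Dstar - ε * ((Dstar - ε) / (2 * (n : ℝ))))

/-! The constraints of `Fk` involve `lam` only through its coordinates and its water level, and the
latter depends only on the sum of the inactive coordinates. Averaging the inactive coordinates
therefore stays in `Fk` and does not change `𝐑_wf`, while strict concavity of `w / (1 + w T)` and
`log (1 + w T)` makes it strictly increase `𝐑_rc` unless they already agree: a maximizer has at most
one inactive value. An active coordinate either sits on the bound `t + ε f_n` or can be moved freely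
at constant trace. For the free ones, stationarity in `(s, T)` along `lam + s • v`, subject to
`D_rc = D`, says that `traceMultiplier` takes a common value `c`. Equivalently they are roots of a
cubic with leading coefficients `c T²` and `2 c T`. If `c ≠ 0`, its roots have sum `-2 / T < 0`,
so at most two are positive; if `c = 0`, the equation is linear. This gives at most `1 + 1 + 2`
values. -/

open Finset Filter Topology
open scoped BigOperators

section Distortion

variable {n : ℕ} {lam : Fin n → ℝ} {D t T : ℝ}

lemma Dwf_strictMonoOn (lam : Fin n → ℝ) :
    StrictMonoOn (Dwf lam) {t | Dwf lam t < (1 / (n : ℝ)) * ∑ i, lam i} := by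
  intro s hs t _ hst
  obtain ⟨i, hi⟩ : ∃ i, s < lam i := by
    by_contra! h
    exact (show Dwf lam s < _ from hs).ne (by simp only [Dwf, min_eq_left (h _)])
  have hn : (0 : ℝ) < n := mod_cast i.pos
  refine mul_lt_mul_of_pos_left (sum_lt_sum (fun j _ ↦ min_le_min_left _ hst.le)
    ⟨i, mem_univ i, ?_⟩) (by positivity)
  rw [min_eq_right hi.le]
  exact lt_min hi hst

lemma Drc_strictAntiOn (h0 : ∀ i, 0 ≤ lam i) (hs : 0 < ∑ i, lam i) :
    StrictAntiOn (Drc lam) (Set.Ici 0) := by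
  intro S (hS : 0 ≤ S) T _ hST
  obtain ⟨i, -, hi⟩ := exists_lt_of_sum_lt (f := fun _ ↦ (0 : ℝ)) (by simpa using hs)
  have hn : (0 : ℝ) < n := mod_cast i.pos
  refine mul_lt_mul_of_pos_left (sum_lt_sum (fun j _ ↦ ?_) ⟨i, mem_univ i, ?_⟩) (by positivity)
  · have := h0 j
    gcongr
  · gcongr

lemma twfD_spec (h0 : ∀ i, 0 ≤ lam i) (hD0 : 0 < D) (hD : D < (1 / (n : ℝ)) * ∑ i, lam i) :
    0 < twfD lam D ∧ Dwf lam (twfD lam D) = D := by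
  refine Classical.epsilon_spec (p := fun t ↦ 0 < t ∧ Dwf lam t = D) ?_
  have hzero : Dwf lam 0 = 0 := by simp only [Dwf, min_eq_right (h0 _), sum_const_zero, mul_zero]
  have htop : Dwf lam (∑ i, lam i) = (1 / (n : ℝ)) * ∑ i, lam i := by
    simp only [Dwf, min_eq_left (single_le_sum (fun j _ ↦ h0 j) (mem_univ _))]
  have hcont : Continuous (Dwf lam) := by unfold Dwf; fun_prop
  obtain ⟨t, ht, htD⟩ := intermediate_value_Icc (sum_nonneg fun i _ ↦ h0 i) hcont.continuousOn
    (show D ∈ Set.Icc _ _ by rw [hzero, htop]; exact ⟨hD0.le, hD.le⟩)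
  refine ⟨t, ht.1.lt_of_ne ?_, htD⟩
  rintro rfl
  exact hD0.ne (hzero.symm.trans htD)

lemma twfD_eq (hD : D < (1 / (n : ℝ)) * ∑ i, lam i) (ht : 0 < t) (htD : Dwf lam t = D) :
    twfD lam D = t := by
  have hspec : 0 < twfD lam D ∧ Dwf lam (twfD lam D) = D :=
    Classical.epsilon_spec (p := fun t ↦ 0 < t ∧ Dwf lam t = D) ⟨t, ht, htD⟩
  exact (Dwf_strictMonoOn lam).injOn (hspec.2.trans_lt hD) (htD.trans_lt hD)
    (hspec.2.trans htD.symm)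

lemma TrcD_spec (h0 : ∀ i, 0 ≤ lam i) (hD0 : 0 < D) (hD : D < (1 / (n : ℝ)) * ∑ i, lam i) :
    0 < TrcD lam D ∧ Drc lam (TrcD lam D) = D := by
  refine Classical.epsilon_spec (p := fun T ↦ 0 < T ∧ Drc lam T = D) ?_
  have hzero : Drc lam 0 = (1 / (n : ℝ)) * ∑ i, lam i := by simp [Drc]
  have hinv : Drc lam D⁻¹ ≤ D := by
    have hterm (i) : lam i / (1 + lam i * D⁻¹) ≤ D := by
      have := h0 i
      rw [div_le_iff₀ (by positivity), mul_add, mul_left_comm, mul_inv_cancel₀ hD0.ne']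
      linarith
    calc Drc lam D⁻¹ ≤ (1 / (n : ℝ)) * ∑ _i : Fin n, D := by unfold Drc; gcongr; exact hterm _
      _ = n / n * D := by simp; ring
      _ ≤ D := mul_le_of_le_one_left hD0.le (div_self_le_one _)
  have hcont : ContinuousOn (Drc lam) (Set.Icc 0 D⁻¹) := by
    refine continuousOn_const.mul (continuousOn_finsetSum _ fun i _ ↦
      continuousOn_const.div (by fun_prop) fun T hT ↦ ?_)
    have := mul_nonneg (h0 i) hT.1
    positivity
  obtain ⟨T, hT, hTD⟩ := intermediate_value_Icc' (by positivity) hcont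
    (show D ∈ Set.Icc _ _ by rw [hzero]; exact ⟨hinv, hD.le⟩)
  refine ⟨T, hT.1.lt_of_ne ?_, hTD⟩
  rintro rfl
  exact hD.ne (hTD.symm.trans hzero)

lemma TrcD_eq (h0 : ∀ i, 0 ≤ lam i) (hs : 0 < ∑ i, lam i) (hT : 0 < T) (hTD : Drc lam T = D) :
    TrcD lam D = T := by
  have hspec : 0 < TrcD lam D ∧ Drc lam (TrcD lam D) = D :=
    Classical.epsilon_spec (p := fun T ↦ 0 < T ∧ Drc lam T = D) ⟨T, hT, hTD⟩
  exact (Drc_strictAntiOn h0 hs).injOn hspec.1.le hT.le (hspec.2.trans hTD.symm)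

end Distortion

section Rate

variable {n : ℕ} {lam : Fin n → ℝ} {t : ℝ}

lemma Dwf_eq_of_separates {A : Finset (Fin n)} (hA : ∀ i ∈ A, t ≤ lam i)
    (hAc : ∀ i ∉ A, lam i ≤ t) : Dwf lam t = (1 / (n : ℝ)) * (#A * t + ∑ i ∈ Aᶜ, lam i) := by
  rw [Dwf, ← sum_add_sum_compl A, sum_congr rfl fun i hi ↦ min_eq_right (hA i hi),
    sum_congr rfl fun i hi ↦ min_eq_left (hAc i (mem_compl.1 hi)), sum_const, nsmul_eq_mul]

lemma Rwf_eq_of_separates {A : Finset (Fin n)} (ht : 0 < t) (h0 : ∀ i, 0 ≤ lam i)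
    (hA : ∀ i ∈ A, t ≤ lam i) (hAc : ∀ i ∉ A, lam i ≤ t) :
    Rwf lam t = (1 / (2 * (n : ℝ) * log 2)) * (∑ i ∈ A, log (lam i) - #A * log t) := by
  have hactive (i) (hi : i ∈ A) : max 0 (logb 2 (lam i / t)) = (log (lam i) - log t) / log 2 := by
    rw [max_eq_right (logb_nonneg one_lt_two ((one_le_div ht).2 (hA i hi))), logb,
      log_div (ht.trans_le (hA i hi)).ne' ht.ne']
  have hinactive (i) (hi : i ∈ Aᶜ) : max 0 (logb 2 (lam i / t)) = 0 :=
    max_eq_left <| logb_nonpos one_lt_two (div_nonneg (h0 i) ht.le)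
      ((div_le_one ht).2 (hAc i (mem_compl.1 hi)))
  rw [Rwf, ← sum_add_sum_compl A, sum_congr rfl hactive, sum_congr rfl hinactive, ← sum_div,
    sum_sub_distrib, sum_const, sum_const_zero, nsmul_eq_mul]
  ring

lemma Rrc_eq_sum_log (lam : Fin n → ℝ) (T : ℝ) :
    Rrc lam T = (1 / (2 * (n : ℝ) * log 2)) * ∑ i, log (1 + lam i * T) := by
  simp only [Rrc, logb, ← sum_div]
  ring

lemma RRrc_lt_RRrc {mu : Fin n → ℝ} {D : ℝ} (hlam : ∀ i, 0 ≤ lam i)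
    (hmu : ∀ i, 0 ≤ mu i) (hD0 : 0 < D) (hDlam : D < (1 / (n : ℝ)) * ∑ i, lam i)
    (hDmu : D < (1 / (n : ℝ)) * ∑ i, mu i)
    (hdist : D < Drc mu (TrcD lam D)) (hrate : Rrc lam (TrcD lam D) < Rrc mu (TrcD lam D)) :
    RRrc lam D < RRrc mu D := by
  obtain ⟨hT, -⟩ := TrcD_spec hlam hD0 hDlam
  obtain ⟨hT', hTD'⟩ := TrcD_spec hmu hD0 hDmu
  have hsum : 0 < ∑ i, mu i := pos_of_mul_pos_right (hD0.trans hDmu) (by positivity)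
  have hTT' : TrcD lam D < TrcD mu D :=
    ((Drc_strictAntiOn hmu hsum).lt_iff_gt hT'.le hT.le).1 (hTD'.trans_lt hdist)
  refine hrate.trans_le (mul_le_mul_of_nonneg_left (sum_le_sum fun i _ ↦ ?_) (by positivity))
  have := hmu i
  exact logb_le_logb_of_le one_lt_two (by positivity) (by gcongr)

end Rate

section Averaging

variable {ι : Type*} [DecidableEq ι]

/-- The vector obtained from `lam` by replacing its coordinates in `S` by their average. -/
noncomputable def averageOn (S : Finset ι) (lam : ι → ℝ) : ι → ℝ :=
  S.piecewise (fun _ ↦ 𝔼 j ∈ S, lam j) lam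

lemma averageOn_of_mem {S : Finset ι} {lam : ι → ℝ} {i : ι} (hi : i ∈ S) :
    averageOn S lam i = 𝔼 j ∈ S, lam j :=
  piecewise_eq_of_mem _ _ _ hi

lemma averageOn_of_notMem {S : Finset ι} {lam : ι → ℝ} {i : ι} (hi : i ∉ S) :
    averageOn S lam i = lam i :=
  piecewise_eq_of_notMem _ _ _ hi

lemma sum_averageOn (S : Finset ι) (lam : ι → ℝ) : ∑ i ∈ S, averageOn S lam i = ∑ i ∈ S, lam i := by
  rw [sum_congr rfl fun i hi ↦ averageOn_of_mem hi, sum_const, card_smul_expect]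

lemma averageOn_nonneg {lam : ι → ℝ} (h0 : ∀ i, 0 ≤ lam i) (S : Finset ι) (i : ι) :
    0 ≤ averageOn S lam i := by
  by_cases hi : i ∈ S
  · exact averageOn_of_mem hi ▸ expect_nonneg fun j _ ↦ h0 j
  · exact averageOn_of_notMem hi ▸ h0 i

lemma sum_comp_lt_sum_comp_averageOn [Fintype ι] {g : ℝ → ℝ} {s : Set ℝ} {S : Finset ι}
    {lam : ι → ℝ} (hg : StrictConcaveOn ℝ s g) (hmem : ∀ i ∈ S, lam i ∈ s)
    (hne : ∃ i ∈ S, ∃ j ∈ S, lam i ≠ lam j) :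
    ∑ i, g (lam i) < ∑ i, g (averageOn S lam i) := by
  have ⟨i, hi, _⟩ := hne
  have hcard : (0 : ℝ) < #S := mod_cast card_pos.2 ⟨i, hi⟩
  have jensen : (#S : ℝ)⁻¹ * ∑ i ∈ S, g (lam i) < g (𝔼 i ∈ S, lam i) := by
    have := hg.lt_map_sum (w := fun _ ↦ (#S : ℝ)⁻¹) (fun _ _ ↦ by positivity)
      (by simp [hcard.ne']) hmem hne
    rwa [← smul_sum, ← smul_sum, smul_eq_mul, smul_eq_mul, inv_mul_eq_div _ (∑ i ∈ S, lam i),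
      ← expect_eq_sum_div_card] at this
  rw [← sum_add_sum_compl S, ← sum_add_sum_compl S,
    sum_congr rfl fun i hi ↦ congrArg g (averageOn_of_mem hi),
    sum_congr rfl fun i hi ↦ congrArg g (averageOn_of_notMem (lam := lam) (mem_compl.1 hi)),
    sum_const, nsmul_eq_mul]
  gcongr
  exact (inv_mul_lt_iff₀ hcard).1 jensen

lemma strictConcaveOn_comp_add_mul {g : ℝ → ℝ} {s u : Set ℝ} {a T : ℝ}
    (hg : StrictConcaveOn ℝ s g) (hu : Convex ℝ u) (hT : T ≠ 0)
    (hmaps : Set.MapsTo (fun w ↦ a + w * T) u s) :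
    StrictConcaveOn ℝ u fun w ↦ g (a + w * T) := by
  refine ⟨hu, fun x hx y hy hxy α β hα hβ hαβ ↦ ?_⟩
  have haff : a + (α • x + β • y) * T = α • (a + x * T) + β • (a + y * T) := by
    simp only [smul_eq_mul]
    linear_combination (-a) * hαβ
  simp only [haff]
  exact hg.2 (hmaps hx) (hmaps hy) (by simpa [hT] using hxy) hα hβ hαβ

lemma mapsTo_add_mul_Ici_Ioi {a T : ℝ} (ha : 0 < a) (hT : 0 ≤ T) :
    Set.MapsTo (fun w ↦ a + w * T) (Set.Ici 0) (Set.Ioi 0) := by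
  intro w (hw : 0 ≤ w)
  exact Set.mem_Ioi.2 (by positivity)

lemma strictConcaveOn_log_one_add_mul {T : ℝ} (hT : 0 < T) :
    StrictConcaveOn ℝ (Set.Ici 0) fun w ↦ log (1 + w * T) :=
  strictConcaveOn_comp_add_mul strictConcaveOn_log_Ioi (convex_Ici 0) hT.ne'
    (mapsTo_add_mul_Ici_Ioi one_pos hT.le)

lemma strictConcaveOn_div_one_add_mul {T : ℝ} (hT : 0 < T) :
    StrictConcaveOn ℝ (Set.Ici 0) fun w ↦ w / (1 + w * T) := by
  have hinv : StrictConvexOn ℝ (Set.Ioi 0) fun u : ℝ ↦ u ^ (-1 : ℤ) :=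
    strictConvexOn_zpow (by norm_num) (by norm_num)
  -- `w / (1 + w T) = T⁻¹ - (T + w T²)⁻¹`
  refine ((strictConcaveOn_comp_add_mul hinv.neg (convex_Ici 0) (pow_pos hT 2).ne'
    (mapsTo_add_mul_Ici_Ioi hT (by positivity))).add_const T⁻¹).congr fun w hw ↦ ?_
  have hw0 : 0 ≤ w := hw
  have hfactor : T + w * T ^ 2 = T * (1 + w * T) := by ring
  simp only [Pi.neg_apply, Pi.add_apply, zpow_neg_one, hfactor]
  field_simp
  ring

end Averaging

section Lagrange

lemma mul_eq_mul_of_isLocalExtrOn {f φ : ℝ × ℝ → ℝ} {p : ℝ × ℝ} {f₁ f₂ φ₁ φ₂ : ℝ}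
    (hextr : IsLocalExtrOn φ {q | f q = f p} p)
    (hf : HasStrictFDerivAt f
      (f₁ • ContinuousLinearMap.fst ℝ ℝ ℝ + f₂ • ContinuousLinearMap.snd ℝ ℝ ℝ) p)
    (hφ : HasStrictFDerivAt φ
      (φ₁ • ContinuousLinearMap.fst ℝ ℝ ℝ + φ₂ • ContinuousLinearMap.snd ℝ ℝ ℝ) p) :
    φ₁ * f₂ = φ₂ * f₁ := by
  obtain ⟨a, b, hab, h⟩ := hextr.exists_multipliers_of_hasStrictFDerivAt_1d hf hφ
  have h₁ : a * f₁ + b * φ₁ = 0 := by simpa using DFunLike.congr_fun h (1, 0)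
  have h₂ : a * f₂ + b * φ₂ = 0 := by simpa using DFunLike.congr_fun h (0, 1)
  by_cases ha : a = 0
  · have hb : b ≠ 0 := fun hb ↦ hab (by rw [ha, hb]; rfl)
    apply mul_left_cancel₀ hb
    linear_combination f₂ * h₁ - f₁ * h₂
  · apply mul_left_cancel₀ ha
    linear_combination φ₁ * h₂ - φ₂ * h₁

variable {ι : Type*} [Fintype ι] {lam v : ι → ℝ} {T : ℝ}

/-- Up to an affine normalisation, the gap `𝐑_rc - 𝐑_wf` of a spectrum with active set `A`, with
the random-coding parameter `T` treated as independent of `lam`. -/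
noncomputable def gapObjective (A : Finset ι) (lam : ι → ℝ) (T : ℝ) : ℝ :=
  ∑ i, log (1 + lam i * T) - ∑ i ∈ A, log (lam i)

lemma hasStrictFDerivAt_add_mul (a v : ℝ) (p : ℝ × ℝ) :
    HasStrictFDerivAt (fun p : ℝ × ℝ ↦ a + p.1 * v) (v • ContinuousLinearMap.fst ℝ ℝ ℝ) p :=
  (hasStrictFDerivAt_fst.mul_const v).const_add a

lemma hasStrictFDerivAt_one_add_mul (a v T : ℝ) :
    HasStrictFDerivAt (fun p : ℝ × ℝ ↦ 1 + (a + p.1 * v) * p.2)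
      ((v * T) • ContinuousLinearMap.fst ℝ ℝ ℝ + a • ContinuousLinearMap.snd ℝ ℝ ℝ) (0, T) := by
  refine (((hasStrictFDerivAt_add_mul a v _).mul hasStrictFDerivAt_snd).const_add 1).congr_fderiv ?_
  ext <;> simp [mul_comm]

lemma hasStrictFDerivAt_gapObjective {A : Finset ι} (hT : ∀ i, 1 + lam i * T ≠ 0)
    (hA : ∀ i ∈ A, lam i ≠ 0) :
    HasStrictFDerivAt (fun p : ℝ × ℝ ↦ gapObjective A (lam + p.1 • v) p.2)
      ((∑ i, v i * T / (1 + lam i * T) - ∑ i ∈ A, v i / lam i) • ContinuousLinearMap.fst ℝ ℝ ℝ +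
        (∑ i, lam i / (1 + lam i * T)) • ContinuousLinearMap.snd ℝ ℝ ℝ) (0, T) := by
  have hrc := HasStrictFDerivAt.fun_sum (u := univ) fun i _ ↦
    (hasStrictFDerivAt_one_add_mul (lam i) (v i) T).log (by simpa using hT i)
  have hwf := HasStrictFDerivAt.fun_sum (u := A) fun i hi ↦
    (hasStrictFDerivAt_add_mul (lam i) (v i) (0, T)).log (by simpa using hA i hi)
  refine (hrc.sub hwf).congr_fderiv ?_
  ext <;> simp [div_eq_inv_mul]

lemma hasStrictFDerivAt_div_one_add_mul {a T : ℝ} (v : ℝ) (haT : 1 + a * T ≠ 0) :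
    HasStrictFDerivAt (fun p : ℝ × ℝ ↦ (a + p.1 * v) / (1 + (a + p.1 * v) * p.2))
      ((v / (1 + a * T) ^ 2) • ContinuousLinearMap.fst ℝ ℝ ℝ +
        (-(a ^ 2 / (1 + a * T) ^ 2)) • ContinuousLinearMap.snd ℝ ℝ ℝ) (0, T) := by
  have hinv := (hasStrictDerivAt_inv (by simpa using haT)).comp_hasStrictFDerivAt _
    (hasStrictFDerivAt_one_add_mul a v T)
  have hfst : a * -(((1 + a * T) ^ 2)⁻¹ * (v * T)) + (1 + a * T)⁻¹ * v = v / (1 + a * T) ^ 2 := by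
    have : 1 + T * a ≠ 0 := mul_comm T a ▸ haT
    field_simp
    ring
  have hsnd : a * -(((1 + a * T) ^ 2)⁻¹ * a) = -(a ^ 2 / (1 + a * T) ^ 2) := by ring
  refine ((hasStrictFDerivAt_add_mul a v (0, T)).mul hinv).congr_fderiv ?_
  ext
  · simpa using hfst
  · simpa using hsnd

lemma hasStrictFDerivAt_Drc {n : ℕ} {lam v : Fin n → ℝ} (hT : ∀ i, 1 + lam i * T ≠ 0) :
    HasStrictFDerivAt (fun p : ℝ × ℝ ↦ Drc (lam + p.1 • v) p.2)
      (((1 / (n : ℝ)) * ∑ i, v i / (1 + lam i * T) ^ 2) • ContinuousLinearMap.fst ℝ ℝ ℝ +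
        (-((1 / (n : ℝ)) * ∑ i, lam i ^ 2 / (1 + lam i * T) ^ 2)) •
          ContinuousLinearMap.snd ℝ ℝ ℝ) (0, T) := by
  refine ((HasStrictFDerivAt.fun_sum fun i (_ : i ∈ univ) ↦
    hasStrictFDerivAt_div_one_add_mul (v i) (hT i)).const_mul (1 / (n : ℝ))).congr_fderiv ?_
  ext <;> simp

/-- The multiplier of the trace constraint that stationarity forces at an active coordinate of
value `x`; here `Q = Σᵢ λᵢ² / (1 + λᵢ T)²` and `C = Σᵢ λᵢ / (1 + λᵢ T)`. -/
noncomputable def traceMultiplier (Q C T x : ℝ) : ℝ :=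
  Q / (x * (1 + x * T)) - C / (1 + x * T) ^ 2

lemma sum_mul_traceMultiplier_eq_zero {n : ℕ} {lam v : Fin n → ℝ} {A : Finset (Fin n)}
    (hextr : IsLocalExtrOn (fun p : ℝ × ℝ ↦ gapObjective A (lam + p.1 • v) p.2)
      {p | Drc (lam + p.1 • v) p.2 = Drc lam T} (0, T))
    (hT : ∀ i, 1 + lam i * T ≠ 0) (hA : ∀ i ∈ A, lam i ≠ 0) (hv : ∀ i ∉ A, v i = 0) :
    ∑ i, v i * traceMultiplier (∑ j, lam j ^ 2 / (1 + lam j * T) ^ 2)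
      (∑ j, lam j / (1 + lam j * T)) T (lam i) = 0 := by
  obtain rfl | hn := eq_or_ne n 0
  · simp
  have hn : (n : ℝ) ≠ 0 := mod_cast hn
  have hcrit := mul_eq_mul_of_isLocalExtrOn (by simpa using hextr) (hasStrictFDerivAt_Drc hT)
    (hasStrictFDerivAt_gapObjective (A := A) hT hA)
  have hterm (i) :
      v i * T / (1 + lam i * T) - v i / lam i = -(v i / (lam i * (1 + lam i * T))) := by
    by_cases hi : i ∈ A
    · have := hA i hi
      have : 1 + T * lam i ≠ 0 := mul_comm T (lam i) ▸ hT i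
      field_simp
      ring
    · simp [hv i hi]
  rw [sum_subset (subset_univ A) fun i _ hi ↦ by rw [hv i hi, zero_div], ← sum_sub_distrib,
    sum_congr rfl fun i _ ↦ hterm i, sum_neg_distrib] at hcrit
  simp only [traceMultiplier, mul_sub, sum_sub_distrib, mul_div_left_comm (v _), ← mul_sum]
  apply mul_left_cancel₀ (one_div_ne_zero hn)
  linear_combination hcrit

lemma mul_add_eq_zero_of_cubic_roots {a b c d x y z : ℝ} (hxy : x ≠ y) (hxz : x ≠ z) (hyz : y ≠ z)
    (hx : a * x ^ 3 + b * x ^ 2 + c * x + d = 0) (hy : a * y ^ 3 + b * y ^ 2 + c * y + d = 0)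
    (hz : a * z ^ 3 + b * z ^ 2 + c * z + d = 0) : a * (x + y + z) + b = 0 := by
  have hprod : (x - y) * (x - z) * (y - z) ≠ 0 := by simp [sub_eq_zero, *]
  apply mul_left_cancel₀ hprod
  linear_combination (y - z) * hx - (x - z) * hy + (x - y) * hz

lemma eq_or_eq_or_eq_of_traceMultiplier_eq {Q C T x y z : ℝ} (hT : 0 < T) (hQ : Q ≠ 0)
    (hx : 0 < x) (hy : 0 < y) (hz : 0 < z) (hxy : traceMultiplier Q C T x = traceMultiplier Q C T y)
    (hxz : traceMultiplier Q C T x = traceMultiplier Q C T z) : x = y ∨ x = z ∨ y = z := by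
  by_contra! ⟨hne_xy, hne_xz, hne_yz⟩
  set c := traceMultiplier Q C T x with hc
  have hcubic {w : ℝ} (hw : 0 < w) (h : c = traceMultiplier Q C T w) :
      (c * T ^ 2) * w ^ 3 + (2 * c * T) * w ^ 2 + (c + C - Q * T) * w + -Q = 0 := by
    have : 1 + w * T ≠ 0 := by positivity
    rw [h, traceMultiplier]
    field_simp
    ring
  have hsum : c * (T * (T * (x + y + z) + 2)) = 0 := by
    linear_combination
      mul_add_eq_zero_of_cubic_roots hne_xy hne_xz hne_yz (hcubic hx hc) (hcubic hy hxy)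
        (hcubic hz hxz)
  -- The roots of a genuine cubic would have the negative sum `-2 / T`.
  have hc0 : c = 0 := (mul_eq_zero.1 hsum).resolve_right (by positivity)
  have hlinear : (C - Q * T) * (x - y) = 0 := by
    have h₁ := hcubic hx hc
    have h₂ := hcubic hy hxy
    simp only [hc0] at h₁ h₂
    linear_combination h₁ - h₂
  have hCQ : C - Q * T = 0 := (mul_eq_zero.1 hlinear).resolve_right (sub_ne_zero.2 hne_xy)
  apply hQ
  linear_combination x * hCQ - hcubic hx hc + (T ^ 2 * x ^ 3 + 2 * T * x ^ 2 + x) * hc0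

end Lagrange

section Feasible

/-- The indices of the active coordinates in the definition of `Fk`. -/
def activeSet (n k : ℕ) : Finset (Fin n) := {i | (i : ℕ) < k}

/-- The distance `ε f_n`, with `f_n = (D - ε) / (2n)`, that the coordinates of a spectrum in `Fk`
keep from the water level. -/
noncomputable def margin (n : ℕ) (D ε : ℝ) : ℝ :=
  ε * ((D - ε) / (2 * (n : ℝ)))

/-- The active coordinates whose lower bound in the definition of `Fk` is slack. -/
noncomputable def freeSet (n k : ℕ) (D ε : ℝ) (lam : Fin n → ℝ) : Finset (Fin n) :=
  {i ∈ activeSet n k | twfD lam D + margin n D ε < lam i}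

/-- The objective `G(λ) = 𝐑_rc(λ, D) - 𝐑_wf(λ, D)`. -/
noncomputable def rateGap {n : ℕ} (D : ℝ) (lam : Fin n → ℝ) : ℝ :=
  RRrc lam D - RRwf lam D

variable {n k : ℕ} {D ε : ℝ} {lam mu v : Fin n → ℝ} {i j : Fin n}

lemma mem_activeSet : i ∈ activeSet n k ↔ (i : ℕ) < k := by simp [activeSet]

lemma mem_freeSet :
    i ∈ freeSet n k D ε lam ↔ i ∈ activeSet n k ∧ twfD lam D + margin n D ε < lam i := by
  simp [freeSet]

lemma margin_nonneg (hε : ε ∈ Set.Icc 0 D) : 0 ≤ margin n D ε :=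
  mul_nonneg hε.1 (div_nonneg (sub_nonneg.2 hε.2) (by positivity))

namespace Fk

lemma active_ge (h : Fk n k D ε lam) (hi : i ∈ activeSet n k) :
    twfD lam D + margin n D ε ≤ lam i :=
  h.2.2.1 i (mem_activeSet.1 hi)

lemma inactive_le (h : Fk n k D ε lam) (hi : i ∉ activeSet n k) :
    lam i ≤ twfD lam D - margin n D ε :=
  h.2.2.2 i (not_lt.1 (mt mem_activeSet.2 hi))

lemma twfD_le_active (h : Fk n k D ε lam) (hε : ε ∈ Set.Icc 0 D) (hi : i ∈ activeSet n k) :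
    twfD lam D ≤ lam i :=
  (le_add_of_nonneg_right (margin_nonneg hε)).trans (h.active_ge hi)

lemma inactive_le_twfD (h : Fk n k D ε lam) (hε : ε ∈ Set.Icc 0 D) (hi : i ∉ activeSet n k) :
    lam i ≤ twfD lam D :=
  (h.inactive_le hi).trans (sub_le_self _ (margin_nonneg hε))

variable [NeZero n]

lemma sum_pos (h : Fk n k D ε lam) : 0 < ∑ i, lam i :=
  h.2.1 ▸ Nat.cast_pos.2 (Nat.pos_of_neZero n)

lemma lt_mean (h : Fk n k D ε lam) (hD : D < 1) : D < (1 / (n : ℝ)) * ∑ i, lam i := by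
  rwa [h.2.1, one_div_mul_cancel (NeZero.ne _)]

lemma twfD_pos (h : Fk n k D ε lam) (hD : D ∈ Set.Ioo 0 1) : 0 < twfD lam D :=
  (twfD_spec h.1 hD.1 (h.lt_mean hD.2)).1

-- The water level does not move: on the active coordinates `min` only sees the level itself.
lemma of_sum_inactive_eq (h : Fk n k D ε lam) (hD : D ∈ Set.Ioo 0 1) (hε : ε ∈ Set.Icc 0 D)
    (h0 : ∀ i, 0 ≤ mu i) (hsum : ∑ i, mu i = ∑ i, lam i)
    (hsum_inactive : ∑ i ∈ (activeSet n k)ᶜ, mu i = ∑ i ∈ (activeSet n k)ᶜ, lam i)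
    (hactive : ∀ i ∈ activeSet n k, twfD lam D + margin n D ε ≤ mu i)
    (hinactive : ∀ i ∉ activeSet n k, mu i ≤ twfD lam D - margin n D ε) :
    Fk n k D ε mu ∧ twfD mu D = twfD lam D := by
  have hm : 0 ≤ margin n D ε := margin_nonneg hε
  obtain ⟨ht, htD⟩ := twfD_spec h.1 hD.1 (h.lt_mean hD.2)
  have hlevel : twfD mu D = twfD lam D := by
    refine twfD_eq (hsum ▸ h.lt_mean hD.2) ht ?_
    rw [Dwf_eq_of_separates (A := activeSet n k) (fun i hi ↦ by linarith [hactive i hi])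
        (fun i hi ↦ by linarith [hinactive i hi]), hsum_inactive,
      ← Dwf_eq_of_separates (fun i ↦ h.twfD_le_active hε) (fun i ↦ h.inactive_le_twfD hε), htD]
  refine ⟨⟨h0, hsum.trans h.2.1, fun i hi ↦ ?_, fun i hi ↦ ?_⟩, hlevel⟩
  · exact hlevel ▸ hactive i (mem_activeSet.2 hi)
  · exact hlevel ▸ hinactive i (mt mem_activeSet.1 (not_lt.2 hi))

lemma RRwf_eq (h : Fk n k D ε lam) (hD : D ∈ Set.Ioo 0 1) (hε : ε ∈ Set.Icc 0 D) :
    RRwf lam D = (1 / (2 * (n : ℝ) * log 2)) *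
      (∑ i ∈ activeSet n k, log (lam i) - #(activeSet n k) * log (twfD lam D)) :=
  Rwf_eq_of_separates (h.twfD_pos hD) h.1 (fun _ ↦ h.twfD_le_active hε)
    fun _ ↦ h.inactive_le_twfD hε

lemma rateGap_eq (h : Fk n k D ε lam) (hD : D ∈ Set.Ioo 0 1) (hε : ε ∈ Set.Icc 0 D) {T : ℝ}
    (hT : 0 < T) (hTD : Drc lam T = D) :
    rateGap D lam = (1 / (2 * (n : ℝ) * log 2)) *
      (gapObjective (activeSet n k) lam T + #(activeSet n k) * log (twfD lam D)) := by
  rw [rateGap, h.RRwf_eq hD hε, RRrc, TrcD_eq h.1 h.sum_pos hT hTD, Rrc_eq_sum_log, gapObjective]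
  ring

lemma averageOn_inactive (h : Fk n k D ε lam) (hD : D ∈ Set.Ioo 0 1) (hε : ε ∈ Set.Icc 0 D) :
    Fk n k D ε (averageOn (activeSet n k)ᶜ lam) ∧
      RRwf (averageOn (activeSet n k)ᶜ lam) D = RRwf lam D := by
  have hactive {l} (hl : l ∈ activeSet n k) : averageOn (activeSet n k)ᶜ lam l = lam l :=
    averageOn_of_notMem fun hl' ↦ mem_compl.1 hl' hl
  have hsum : ∑ l, averageOn (activeSet n k)ᶜ lam l = ∑ l, lam l := by
    rw [← sum_add_sum_compl (activeSet n k), ← sum_add_sum_compl (activeSet n k) lam,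
      sum_averageOn, sum_congr rfl fun l hl ↦ hactive hl]
  obtain ⟨hfeas, hlevel⟩ := h.of_sum_inactive_eq hD hε (averageOn_nonneg h.1 _) hsum
    (sum_averageOn _ lam) (fun l hl ↦ (h.active_ge hl).trans_eq (hactive hl).symm) fun l hl ↦ by
      rw [averageOn_of_mem (mem_compl.2 hl)]
      exact expect_le ⟨l, mem_compl.2 hl⟩ fun m hm ↦ h.inactive_le (mem_compl.1 hm)
  refine ⟨hfeas, ?_⟩
  rw [hfeas.RRwf_eq hD hε, h.RRwf_eq hD hε, hlevel,
    sum_congr rfl fun l hl ↦ congrArg log (hactive hl)]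

lemma inactive_eq (h : Fk n k D ε lam) (hD : D ∈ Set.Ioo 0 1) (hε : ε ∈ Set.Icc 0 D)
    (hmax : IsMaxOn (rateGap D) {mu | Fk n k D ε mu} lam)
    (hi : i ∉ activeSet n k) (hj : j ∉ activeSet n k) : lam i = lam j := by
  by_contra hne
  obtain ⟨hT, hTD⟩ := TrcD_spec h.1 hD.1 (h.lt_mean hD.2)
  obtain ⟨hfeas, hRRwf⟩ := h.averageOn_inactive hD hε
  have hgain {g : ℝ → ℝ} (hg : StrictConcaveOn ℝ (Set.Ici 0) g) :
      ∑ l, g (lam l) < ∑ l, g (averageOn (activeSet n k)ᶜ lam l) :=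
    sum_comp_lt_sum_comp_averageOn hg (fun l _ ↦ h.1 l)
      ⟨i, mem_compl.2 hi, j, mem_compl.2 hj, hne⟩
  have hn : (0 : ℝ) < n := Nat.cast_pos.2 (Nat.pos_of_neZero n)
  have hRRrc : RRrc lam D < RRrc (averageOn (activeSet n k)ᶜ lam) D := by
    refine RRrc_lt_RRrc h.1 hfeas.1 hD.1 (h.lt_mean hD.2) (hfeas.lt_mean hD.2) ?_ ?_
    · refine hTD.symm.trans_lt (mul_lt_mul_of_pos_left ?_ (by positivity))
      exact hgain (strictConcaveOn_div_one_add_mul hT)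
    · rw [Rrc_eq_sum_log, Rrc_eq_sum_log]
      exact mul_lt_mul_of_pos_left (hgain (strictConcaveOn_log_one_add_mul hT)) (by positivity)
  have hle := isMaxOn_iff.1 hmax _ hfeas
  simp only [rateGap, hRRwf] at hle
  linarith

lemma eventually_add_smul (h : Fk n k D ε lam) (hD : D ∈ Set.Ioo 0 1) (hε : ε ∈ Set.Icc 0 D)
    (hsum : ∑ i, v i = 0) (hv : ∀ i ∉ freeSet n k D ε lam, v i = 0) :
    ∀ᶠ s in 𝓝 (0 : ℝ), Fk n k D ε (lam + s • v) ∧ twfD (lam + s • v) D = twfD lam D := by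
  have hfixed {l} (hl : l ∉ freeSet n k D ε lam) (s : ℝ) : (lam + s • v) l = lam l := by
    simp [hv l hl]
  have hinactive {l} (hl : l ∉ activeSet n k) (s : ℝ) : (lam + s • v) l = lam l :=
    hfixed (fun hl' ↦ hl (mem_freeSet.1 hl').1) s
  have hactive : ∀ᶠ s in 𝓝 (0 : ℝ), ∀ l ∈ activeSet n k,
      twfD lam D + margin n D ε ≤ (lam + s • v) l := by
    refine (eventually_all_finset _).2 fun l hl ↦ ?_
    by_cases hfree : l ∈ freeSet n k D ε lam
    · have hcont : Continuous fun s : ℝ ↦ (lam + s • v) l := by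
        simp only [Pi.add_apply, Pi.smul_apply]
        fun_prop
      filter_upwards [hcont.continuousAt.eventually_const_lt
        (by simpa using (mem_freeSet.1 hfree).2)] with s hs using hs.le
    · exact .of_forall fun s ↦ (h.active_ge hl).trans_eq (hfixed hfree s).symm
  filter_upwards [hactive] with s hs
  refine h.of_sum_inactive_eq hD hε (fun l ↦ ?_) ?_ (sum_congr rfl fun l hl ↦
    hinactive (mem_compl.1 hl) s) hs fun l hl ↦ (hinactive hl s).trans_le (h.inactive_le hl)
  · by_cases hl : l ∈ activeSet n k
    · exact (add_nonneg (h.twfD_pos hD).le (margin_nonneg hε)).trans (hs l hl)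
    · exact (h.1 l).trans_eq (hinactive hl s).symm
  · simp [sum_add_distrib, ← mul_sum, hsum]

lemma isLocalMaxOn_gapObjective (h : Fk n k D ε lam) (hD : D ∈ Set.Ioo 0 1)
    (hε : ε ∈ Set.Icc 0 D) (hmax : IsMaxOn (rateGap D) {mu | Fk n k D ε mu} lam)
    (hsum : ∑ i, v i = 0) (hv : ∀ i ∉ freeSet n k D ε lam, v i = 0) :
    IsLocalMaxOn (fun p : ℝ × ℝ ↦ gapObjective (activeSet n k) (lam + p.1 • v) p.2)
      {p | Drc (lam + p.1 • v) p.2 = Drc lam (TrcD lam D)} (0, TrcD lam D) := by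
  obtain ⟨hT, hTD⟩ := TrcD_spec h.1 hD.1 (h.lt_mean hD.2)
  have hfeas := (continuous_fst.tendsto ((0 : ℝ), TrcD lam D)).eventually
    (h.eventually_add_smul hD hε hsum hv)
  have hpos := continuous_snd.continuousAt.eventually_const_lt
    (show 0 < ((0 : ℝ), TrcD lam D).2 from hT)
  filter_upwards [self_mem_nhdsWithin, nhdsWithin_le_nhds hfeas, nhdsWithin_le_nhds hpos]
    with ⟨s, T⟩ (hdist : Drc (lam + s • v) T = _) ⟨hmem, hlevel⟩ hTpos
  have hle := isMaxOn_iff.1 hmax _ hmem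
  rw [hmem.rateGap_eq hD hε hTpos (hdist.trans hTD), h.rateGap_eq hD hε hT hTD, hlevel] at hle
  have hn : (0 : ℝ) < n := Nat.cast_pos.2 (Nat.pos_of_neZero n)
  simpa using le_of_mul_le_mul_left hle (by positivity)

lemma traceMultiplier_eq (h : Fk n k D ε lam) (hD : D ∈ Set.Ioo 0 1) (hε : ε ∈ Set.Icc 0 D)
    (hmax : IsMaxOn (rateGap D) {mu | Fk n k D ε mu} lam)
    (hi : i ∈ freeSet n k D ε lam) (hj : j ∈ freeSet n k D ε lam) :
    traceMultiplier (∑ l, lam l ^ 2 / (1 + lam l * TrcD lam D) ^ 2)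
        (∑ l, lam l / (1 + lam l * TrcD lam D)) (TrcD lam D) (lam i) =
      traceMultiplier (∑ l, lam l ^ 2 / (1 + lam l * TrcD lam D) ^ 2)
        (∑ l, lam l / (1 + lam l * TrcD lam D)) (TrcD lam D) (lam j) := by
  have hT := (TrcD_spec h.1 hD.1 (h.lt_mean hD.2)).1
  set v : Fin n → ℝ := Pi.single i 1 - Pi.single j 1
  have hsum : ∑ l, v l = 0 := by simp [v]
  have hv (l) (hl : l ∉ freeSet n k D ε lam) : v l = 0 := by
    have hli : l ≠ i := by rintro rfl; exact hl hi
    have hlj : l ≠ j := by rintro rfl; exact hl hj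
    simp [v, hli, hlj]
  have := sum_mul_traceMultiplier_eq_zero
    (.inr (h.isLocalMaxOn_gapObjective hD hε hmax hsum hv))
    (fun l ↦ by have := h.1 l; positivity)
    (fun l hl ↦ ((h.twfD_pos hD).trans_le (h.twfD_le_active hε hl)).ne')
    fun l hl ↦ hv l fun hl' ↦ hl (mem_freeSet.1 hl').1
  simpa [v, sub_mul, sub_eq_zero, Pi.single_apply] using this

lemma card_image_freeSet_le_two (h : Fk n k D ε lam) (hD : D ∈ Set.Ioo 0 1)
    (hε : ε ∈ Set.Icc 0 D) (hmax : IsMaxOn (rateGap D) {mu | Fk n k D ε mu} lam) :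
    #((freeSet n k D ε lam).image lam) ≤ 2 := by
  have hT := (TrcD_spec h.1 hD.1 (h.lt_mean hD.2)).1
  have hpos {l} (hl : l ∈ freeSet n k D ε lam) : 0 < lam l :=
    (h.twfD_pos hD).trans_le (h.twfD_le_active hε (mem_freeSet.1 hl).1)
  by_contra! hcard
  obtain ⟨x, hx, y, hy, z, hz, hxy, hxz, hyz⟩ := two_lt_card.1 hcard
  obtain ⟨i, hi, rfl⟩ := mem_image.1 hx
  obtain ⟨j, hj, rfl⟩ := mem_image.1 hy
  obtain ⟨m, hm, rfl⟩ := mem_image.1 hz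
  have hQ : 0 < ∑ l, lam l ^ 2 / (1 + lam l * TrcD lam D) ^ 2 :=
    Finset.sum_pos' (fun l _ ↦ by positivity) ⟨i, mem_univ i, by have := hpos hi; positivity⟩
  obtain e | e | e := eq_or_eq_or_eq_of_traceMultiplier_eq hT hQ.ne' (hpos hi) (hpos hj) (hpos hm)
    (h.traceMultiplier_eq hD hε hmax hi hj) (h.traceMultiplier_eq hD hε hmax hi hm)
  exacts [hxy e, hxz e, hyz e]

end Fk

end Feasible

theorem stmt_15_general {n k : ℕ} {D ε : ℝ} {lam : Fin n → ℝ} (hD : D ∈ Set.Ioo 0 1)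
    (hε : ε ∈ Set.Icc 0 D) (hmem : Fk n k D ε lam)
    (hmax : IsMaxOn (rateGap D) {mu | Fk n k D ε mu} lam) :
    Nat.card (Set.range lam) ≤ 4 := by
  obtain rfl | _ := eq_zero_or_neZero n
  · simp
  have hinactive : #((activeSet n k)ᶜ.image lam) ≤ 1 := by
    refine card_le_one.2 fun x hx y hy ↦ ?_
    obtain ⟨i, hi, rfl⟩ := mem_image.1 hx
    obtain ⟨j, hj, rfl⟩ := mem_image.1 hy
    exact hmem.inactive_eq hD hε hmax (mem_compl.1 hi) (mem_compl.1 hj)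
  have hfree := hmem.card_image_freeSet_le_two hD hε hmax
  have hcover : Set.range lam ⊆ ↑(insert (twfD lam D + margin n D ε)
      ((activeSet n k)ᶜ.image lam ∪ (freeSet n k D ε lam).image lam)) := by
    rintro _ ⟨i, rfl⟩
    by_cases hi : i ∈ activeSet n k
    · obtain hlt | heq := (hmem.active_ge hi).lt_or_eq
      · exact mem_insert_of_mem (mem_union_right _
          (mem_image_of_mem lam (mem_freeSet.2 ⟨hi, hlt⟩)))
      · exact heq ▸ mem_insert_self _ _
    · exact mem_insert_of_mem (mem_union_left _ (mem_image_of_mem lam (mem_compl.2 hi)))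
  have hunion := card_union_le ((activeSet n k)ᶜ.image lam) ((freeSet n k D ε lam).image lam)
  calc Nat.card (Set.range lam) ≤ _ := Set.ncard_le_ncard hcover (finite_toSet _)
    _ = _ := Set.ncard_coe_finset _
    _ ≤ _ := card_insert_le _ _
    _ ≤ 4 := by lia

/-- at a maximizer of `G(λ) = 𝐑_rc(λ, D*) - 𝐑_wf(λ, D*)` over `F_k`,
the coordinates take at most 5 distinct values. -/
theorem stmt_15 (n : ℕ) (hn : 1 ≤ n) (Dstar ε : ℝ)
    (hD : Dstar ∈ Set.Icc (0.005 : ℝ) 0.995) (hε : ε ∈ Set.Ioo (0 : ℝ) Dstar)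
    (k : ℕ) (hk : k ≤ n) (lamStar : Fin n → ℝ)
    (hmem : Fk n k Dstar ε lamStar)
    (hmax : ∀ lam : Fin n → ℝ, Fk n k Dstar ε lam →
      RRrc lam Dstar - RRwf lam Dstar ≤ RRrc lamStar Dstar - RRwf lamStar Dstar) :
    Nat.card (Set.range lamStar) ≤ 5 := by
  exact (stmt_15_general ⟨hε.1.trans hε.2, hD.2.trans_lt (by norm_num)⟩ ⟨hε.1.le, hε.2.le⟩ hmem
    (isMaxOn_iff.2 hmax)).trans (by norm_num)
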